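/- Fix an integer N ≥ 1 and a field F of characteristic 0. Let h, u ∈ F satisfy u ≠ 0, u − h/N ≠ 0, u² − h² ≠ 0, u + Nh ≠ 0, and u + Nh − h/N ≠ 0. Then the rational R-matrix R(u) is invertible, its partial transpose (R(u)⁻¹)^{t₁} is invertible, and the crossing symmetry identity holds: (((R(u)⁻¹)^{t₁})⁻¹)^{t₁} = g(u) · R(u + Nh), where g(u) = (u² − h²)(u + Nh − h/N) / (u · (u − h/N) · (u + Nh)). The same identity holds with the partial transpose t₂ in place of t₁: (((R(u)⁻¹)^{t₂})⁻¹)^{t₂} = g(u) · R(u + Nh). -/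

import Mathlib

/-!
The flip `P` satisfies `P² = 1`, so `u - hP` has inverse `(u² - h²)⁻¹ (u + hP)`. Partial
transposition fixes `1` and turns `P` into the rank-one matrix `K` with `K² = NK`; this relation
makes `u + hK` inverse to `(u + Nh) - hK` up to the scalar `u (u + Nh)`, which is where the shift
by `Nh` comes from, and partially transposing back gives `(u + Nh) - hP`. The two partial transposes
differ by the full transpose, which commutes with inversion, so `t₁` and `t₂` give the same result.
-/

/- STATEMENT 3: Crossing symmetry of the rational R-matrix:
(((R(u)⁻¹)^{t₁})⁻¹)^{t₁} = g(u) · R(u + Nh) with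
g(u) = (u² − h²)(u + Nh − h/N) / (u (u − h/N) (u + Nh)), and likewise for t₂. -/

noncomputable section

/-- The flip (permutation) matrix `P` on `F^N ⊗ F^N`: `P_{(i,j),(k,l)} = δ_{il} δ_{jk}`. -/
def flipMat (N : ℕ) (F : Type*) [Field F] :
    Matrix (Fin N × Fin N) (Fin N × Fin N) F :=
  fun p q => if p.1 = q.2 ∧ p.2 = q.1 then 1 else 0

/-- The rational R-matrix of the paper: `R(u) = (u − h/N)⁻¹ • (u·1 − h·P)`. -/
def Rrat (N : ℕ) (F : Type*) [Field F] (h u : F) :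
    Matrix (Fin N × Fin N) (Fin N × Fin N) F :=
  (u - h / (N : F))⁻¹ • (u • (1 : Matrix (Fin N × Fin N) (Fin N × Fin N) F) - h • flipMat N F)

/-- Partial transpose in the first tensor factor: `(M^{t₁})_{(i,j),(k,l)} = M_{(k,j),(i,l)}`. -/
def pt1 (N : ℕ) (F : Type*) [Field F] (M : Matrix (Fin N × Fin N) (Fin N × Fin N) F) :
    Matrix (Fin N × Fin N) (Fin N × Fin N) F :=
  fun p q => M (q.1, p.2) (p.1, q.2)

/-- Partial transpose in the second tensor factor: `(M^{t₂})_{(i,j),(k,l)} = M_{(i,l),(k,j)}`. -/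
def pt2 (N : ℕ) (F : Type*) [Field F] (M : Matrix (Fin N × Fin N) (Fin N × Fin N) F) :
    Matrix (Fin N × Fin N) (Fin N × Fin N) F :=
  fun p q => M (p.1, q.2) (q.1, p.2)

theorem isUnit_smul_of_ne_zero {F A : Type*} [GroupWithZero F] [Monoid A] [MulAction F A]
    [SMulCommClass F A A] [IsScalarTower F A A] {c : F} {x : A} (hc : c ≠ 0) (hx : IsUnit x) :
    IsUnit (c • x) :=
  hx.smul (Units.mk0 c hc)

section Inverse

variable {ι F : Type*} [Fintype ι] [DecidableEq ι] [Field F] {A B : Matrix ι ι F} {c : F}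

theorem mul_inv_smul_eq_one (hc : c ≠ 0) (hAB : A * B = c • 1) : A * (c⁻¹ • B) = 1 := by
  rw [mul_smul_comm, hAB, inv_smul_smul₀ hc]

theorem isUnit_of_mul_eq_smul_one (hc : c ≠ 0) (hAB : A * B = c • 1) : IsUnit A :=
  .of_mul_eq_one _ (mul_inv_smul_eq_one hc hAB)

theorem inv_eq_inv_smul_of_mul_eq_smul_one (hc : c ≠ 0) (hAB : A * B = c • 1) :
    A⁻¹ = c⁻¹ • B :=
  Matrix.inv_eq_right_inv (mul_inv_smul_eq_one hc hAB)

theorem inv_smul_of_isUnit (hc : c ≠ 0) (hA : IsUnit A) : (c • A)⁻¹ = c⁻¹ • A⁻¹ :=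
  Matrix.inv_smul' _ (Units.mk0 c hc) ((Matrix.isUnit_iff_isUnit_det A).mp hA)

end Inverse

section Algebra

variable {R A : Type*} [CommRing R] [Ring A] [Algebra R A] {x : A}

theorem smul_one_sub_smul_mul_smul_one_add_smul_of_mul_self_eq_one (hx : x * x = 1) (a b : R) :
    (a • 1 - b • x) * (a • 1 + b • x) = (a ^ 2 - b ^ 2) • (1 : A) := by
  simp only [sub_mul, mul_add, smul_mul_smul_comm, one_mul, mul_one, hx]
  module

theorem smul_one_add_smul_mul_smul_one_sub_smul_of_mul_self_eq_smul {n : R} (hx : x * x = n • x)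
    (a b : R) :
    (a • 1 + b • x) * ((a + n * b) • 1 - b • x) = (a * (a + n * b)) • (1 : A) := by
  simp only [add_mul, mul_sub, smul_mul_smul_comm, one_mul, mul_one, hx]
  module

end Algebra

section PartialTranspose

variable {N : ℕ} {F : Type*} [Field F] (M M' : Matrix (Fin N × Fin N) (Fin N × Fin N) F)

theorem pt1_one : pt1 N F 1 = 1 := by
  ext p q
  simp only [pt1, Matrix.one_apply, Prod.ext_iff, eq_comm (a := q.1)]

theorem pt1_add : pt1 N F (M + M') = pt1 N F M + pt1 N F M' :=
  rfl

theorem pt1_sub : pt1 N F (M - M') = pt1 N F M - pt1 N F M' :=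
  rfl

theorem pt1_smul (c : F) : pt1 N F (c • M) = c • pt1 N F M :=
  rfl

theorem pt1_pt1 : pt1 N F (pt1 N F M) = M :=
  rfl

theorem pt2_eq_transpose_pt1 : pt2 N F M = (pt1 N F M).transpose :=
  rfl

theorem pt2_transpose : pt2 N F M.transpose = pt1 N F M :=
  rfl

theorem isUnit_pt2_iff_isUnit_pt1 : IsUnit (pt2 N F M) ↔ IsUnit (pt1 N F M) := by
  rw [pt2_eq_transpose_pt1, Matrix.isUnit_transpose]

theorem pt2_inv_pt2 : pt2 N F (pt2 N F M)⁻¹ = pt1 N F (pt1 N F M)⁻¹ := by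
  rw [pt2_eq_transpose_pt1 M, ← Matrix.transpose_nonsing_inv, pt2_transpose]

end PartialTranspose

section Contraction

variable {N : ℕ} {F : Type*} [Field F]

variable (N F) in
/-- The contraction `K = P^{t₁}`, equal to `v vᵀ` for the invariant vector `v = ∑ᵢ eᵢ ⊗ eᵢ`, which
is encoded as the vectorization of the identity matrix. -/
def contractionMat : Matrix (Fin N × Fin N) (Fin N × Fin N) F :=
  Matrix.vecMulVec (Matrix.vec 1) (Matrix.vec 1)

theorem flipMat_eq_permMatrix :
    flipMat N F = Equiv.Perm.permMatrix F (Equiv.prodComm (Fin N) (Fin N)) := by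
  ext p q
  simp [flipMat, PEquiv.toMatrix_apply, Prod.ext_iff, eq_comm, and_comm]

theorem flipMat_mul_self : flipMat N F * flipMat N F = 1 := by
  rw [flipMat_eq_permMatrix, ← Matrix.permMatrix_mul]
  exact Matrix.permMatrix_one

theorem contractionMat_mul_self :
    contractionMat N F * contractionMat N F = (N : F) • contractionMat N F := by
  have norm_sq : Matrix.vec (1 : Matrix (Fin N) (Fin N) F) ⬝ᵥ Matrix.vec 1 = N := by
    simp [Matrix.vec_dotProduct_vec]
  rw [contractionMat, Matrix.vecMulVec_mul_vecMulVec, norm_sq, Matrix.vecMulVec_smul]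

theorem pt1_flipMat : pt1 N F (flipMat N F) = contractionMat N F := by
  ext p q
  simp [pt1, flipMat, contractionMat, Matrix.vecMulVec_apply, Matrix.vec, Matrix.one_apply,
    ← ite_and, eq_comm, and_comm]

theorem pt1_contractionMat : pt1 N F (contractionMat N F) = flipMat N F := by
  rw [← pt1_flipMat, pt1_pt1]

end Contraction

section YangMatrix

variable {N : ℕ} {F : Type*} [Field F] {h u : F}

variable (N F) in
/-- The unnormalized Yang R-matrix `u - hP`, of which `Rrat` is a scalar multiple. -/
def yangMat (h u : F) : Matrix (Fin N × Fin N) (Fin N × Fin N) F :=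
  u • 1 - h • flipMat N F

theorem yangMat_mul (h u : F) :
    yangMat N F h u * (u • 1 + h • flipMat N F) = (u ^ 2 - h ^ 2) • 1 :=
  smul_one_sub_smul_mul_smul_one_add_smul_of_mul_self_eq_one flipMat_mul_self u h

theorem isUnit_yangMat (huh : u ^ 2 - h ^ 2 ≠ 0) : IsUnit (yangMat N F h u) :=
  isUnit_of_mul_eq_smul_one huh (yangMat_mul h u)

theorem pt1_inv_yangMat (huh : u ^ 2 - h ^ 2 ≠ 0) :
    pt1 N F (yangMat N F h u)⁻¹ = (u ^ 2 - h ^ 2)⁻¹ • (u • 1 + h • contractionMat N F) := by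
  rw [inv_eq_inv_smul_of_mul_eq_smul_one huh (yangMat_mul h u), pt1_smul, pt1_add, pt1_smul,
    pt1_smul, pt1_one, pt1_flipMat]

theorem pt1_inv_yangMat_mul (huh : u ^ 2 - h ^ 2 ≠ 0) :
    pt1 N F (yangMat N F h u)⁻¹ * ((u + N * h) • 1 - h • contractionMat N F) =
      (u * (u + N * h) / (u ^ 2 - h ^ 2)) • 1 := by
  rw [pt1_inv_yangMat huh, smul_mul_assoc,
    smul_one_add_smul_mul_smul_one_sub_smul_of_mul_self_eq_smul contractionMat_mul_self,
    smul_smul, inv_mul_eq_div]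

theorem isUnit_pt1_inv_yangMat (hu : u ≠ 0) (huh : u ^ 2 - h ^ 2 ≠ 0) (huN : u + N * h ≠ 0) :
    IsUnit (pt1 N F (yangMat N F h u)⁻¹) :=
  isUnit_of_mul_eq_smul_one (div_ne_zero (mul_ne_zero hu huN) huh) (pt1_inv_yangMat_mul huh)

theorem pt1_inv_pt1_inv_yangMat (hu : u ≠ 0) (huh : u ^ 2 - h ^ 2 ≠ 0) (huN : u + N * h ≠ 0) :
    pt1 N F (pt1 N F (yangMat N F h u)⁻¹)⁻¹ =
      ((u ^ 2 - h ^ 2) / (u * (u + N * h))) • yangMat N F h (u + N * h) := by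
  rw [inv_eq_inv_smul_of_mul_eq_smul_one (div_ne_zero (mul_ne_zero hu huN) huh)
    (pt1_inv_yangMat_mul huh), inv_div, pt1_smul, pt1_sub, pt1_smul, pt1_smul, pt1_one,
    pt1_contractionMat, yangMat]

end YangMatrix

theorem rational_R_matrix_crossing_symmetry_general (N : ℕ) {F : Type*} [Field F] (c : F → F)
    {h u : F} (hu : u ≠ 0) (hcu : c u ≠ 0) (huh : u ^ 2 - h ^ 2 ≠ 0) (huN : u + N * h ≠ 0)
    (hcuN : c (u + N * h) ≠ 0) :
    let R : F → Matrix (Fin N × Fin N) (Fin N × Fin N) F := fun v => (c v)⁻¹ • yangMat N F h v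
    let g := (u ^ 2 - h ^ 2) * c (u + N * h) / (u * c u * (u + N * h))
    IsUnit (R u) ∧
      IsUnit (pt1 N F (R u)⁻¹) ∧ pt1 N F (pt1 N F (R u)⁻¹)⁻¹ = g • R (u + N * h) ∧
      IsUnit (pt2 N F (R u)⁻¹) ∧ pt2 N F (pt2 N F (R u)⁻¹)⁻¹ = g • R (u + N * h) := by
  intro R g
  have isUnit_yang : IsUnit (yangMat N F h u) := isUnit_yangMat huh
  have isUnit_pt1_yang := isUnit_pt1_inv_yangMat hu huh huN
  have pt1_inv : pt1 N F (R u)⁻¹ = c u • pt1 N F (yangMat N F h u)⁻¹ := by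
    rw [inv_smul_of_isUnit (inv_ne_zero hcu) isUnit_yang, inv_inv, pt1_smul]
  have isUnit_pt1 : IsUnit (pt1 N F (R u)⁻¹) :=
    pt1_inv ▸ isUnit_smul_of_ne_zero hcu isUnit_pt1_yang
  have crossing : pt1 N F (pt1 N F (R u)⁻¹)⁻¹ = g • R (u + N * h) := by
    rw [pt1_inv, inv_smul_of_isUnit hcu isUnit_pt1_yang, pt1_smul,
      pt1_inv_pt1_inv_yangMat hu huh huN, smul_smul, smul_smul]
    congr 1
    dsimp only [g]
    generalize u + N * h = w at huN hcuN ⊢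
    field_simp
  exact ⟨isUnit_smul_of_ne_zero (inv_ne_zero hcu) isUnit_yang, isUnit_pt1, crossing,
    (isUnit_pt2_iff_isUnit_pt1 _).mpr isUnit_pt1, (pt2_inv_pt2 _).trans crossing⟩

theorem rational_R_matrix_crossing_symmetry
    (N : ℕ) (hN : 1 ≤ N) (F : Type*) [Field F] [CharZero F]
    (h u : F)
    (h0 : u ≠ 0)
    (h1 : u - h / (N : F) ≠ 0)
    (h2 : u ^ 2 - h ^ 2 ≠ 0)
    (h3 : u + (N : F) * h ≠ 0)
    (h4 : u + (N : F) * h - h / (N : F) ≠ 0) :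
    IsUnit (Rrat N F h u) ∧
      IsUnit (pt1 N F (Rrat N F h u)⁻¹) ∧
      pt1 N F (pt1 N F (Rrat N F h u)⁻¹)⁻¹ =
        ((u ^ 2 - h ^ 2) * (u + (N : F) * h - h / (N : F)) /
            (u * (u - h / (N : F)) * (u + (N : F) * h))) •
          Rrat N F h (u + (N : F) * h) ∧
      IsUnit (pt2 N F (Rrat N F h u)⁻¹) ∧
      pt2 N F (pt2 N F (Rrat N F h u)⁻¹)⁻¹ =
        ((u ^ 2 - h ^ 2) * (u + (N : F) * h - h / (N : F)) /
            (u * (u - h / (N : F)) * (u + (N : F) * h))) •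
          Rrat N F h (u + (N : F) * h) :=
  rational_R_matrix_crossing_symmetry_general N (fun v => v - h / (N : F)) h0 h1 h2 h3 h4
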